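/- arXiv:1310.0422 — 6 statements merged into one kernel-verified Lean document; each statement's English description precedes it below -/
import Mathlib

section
/- Let λ > 0, ε ∈ (0,1), m ≥ 3 an integer, and φ_ε(u) = -λ/(1+u) + λ ε^{m-2}/((m-1)(1+u)^{m-1}) for u ∈ (-1,∞). For every u₀ ∈ (-1,∞) there exists a unique differentiable function u : [0,∞) → (-1,∞) with u(0) = u₀ and u'(t) = -φ_ε'(u(t)) for all t ≥ 0; moreover min(u₀, -1+ε) ≤ u(t) ≤ max(u₀, -1+ε) for all t ≥ 0. In particular the solution exists globally in time and never reaches the obstacle value u = -1. -/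
/-!
For `x > -1` the derivative `φ'(x) = λ ((1 + x) ^ (m - 2) - ε ^ (m - 2)) / (1 + x) ^ m` is
nonpositive below `-1 + ε` and nonnegative above. Hence `-φ'` points into the compact interval
between `u₀` and `-1 + ε` at both of its endpoints. Extending `-φ'` beyond this interval by its
endpoint values yields a bounded Lipschitz field, which has a global solution; that solution cannot
leave the interval, so it solves the original equation. Two solutions in `(-1, ∞)` stay, up to any
given time, in a compact set, on which `-φ'` is Lipschitz, and Grönwall's inequality identifies
them.
-/

open Set Filter NNReal

section IntegralCurve

variable {E : Type*} [NormedAddCommGroup E] [NormedSpace ℝ E] {γ γ' : ℝ → E} {v : ℝ → E → E}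
  {a b : ℝ}

theorem hasDerivWithinAt_Ici_of_isIntegralCurveOn_Icc (hγ : IsIntegralCurveOn γ v (Icc a b)) {t : ℝ}
    (ht : t ∈ Ico a b) : HasDerivWithinAt γ (v t (γ t)) (Ici t) t :=
  (hγ t (Ico_subset_Icc_self ht)).mono_of_mem_nhdsWithin <|
    mem_of_superset (Icc_mem_nhdsGE ht.2) (Icc_subset_Icc_left ht.1)

theorem eqOn_Icc_of_isIntegralCurveOn {f : E → E} {s : Set E} (hf : LocallyLipschitzOn s f)
    (hγ : IsIntegralCurveOn γ (fun _ ↦ f) (Icc a b)) (hγs : MapsTo γ (Icc a b) s)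
    (hγ' : IsIntegralCurveOn γ' (fun _ ↦ f) (Icc a b)) (hγs' : MapsTo γ' (Icc a b) s)
    (ha : γ a = γ' a) : EqOn γ γ' (Icc a b) := by
  have compact_orbits : IsCompact (γ '' Icc a b ∪ γ' '' Icc a b) :=
    (isCompact_Icc.image_of_continuousOn hγ.continuousOn).union
      (isCompact_Icc.image_of_continuousOn hγ'.continuousOn)
  obtain ⟨K, hK⟩ := (hf.mono (union_subset hγs.image_subset
    hγs'.image_subset)).exists_lipschitzOnWith_of_compact compact_orbits
  exact ODE_solution_unique_of_mem_Icc_right (fun _ _ ↦ hK)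
    hγ.continuousOn (fun _ ↦ hasDerivWithinAt_Ici_of_isIntegralCurveOn_Icc hγ)
    (fun _ ht ↦ .inl (mem_image_of_mem γ (Ico_subset_Icc_self ht)))
    hγ'.continuousOn (fun _ ↦ hasDerivWithinAt_Ici_of_isIntegralCurveOn_Icc hγ')
    (fun _ ht ↦ .inr (mem_image_of_mem γ' (Ico_subset_Icc_self ht))) ha

theorem eqOn_Ici_of_isIntegralCurveOn {f : E → E} {s : Set E} (hf : LocallyLipschitzOn s f)
    (hγ : IsIntegralCurveOn γ (fun _ ↦ f) (Ici a)) (hγs : MapsTo γ (Ici a) s)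
    (hγ' : IsIntegralCurveOn γ' (fun _ ↦ f) (Ici a)) (hγs' : MapsTo γ' (Ici a) s)
    (ha : γ a = γ' a) : EqOn γ γ' (Ici a) := fun _ ht ↦
  eqOn_Icc_of_isIntegralCurveOn hf
    (hγ.mono Icc_subset_Ici_self) (hγs.mono_left Icc_subset_Ici_self)
    (hγ'.mono Icc_subset_Ici_self) (hγs'.mono_left Icc_subset_Ici_self) ha (right_mem_Icc.2 ht)

theorem exists_isIntegralCurveOn_Ici_of_forall_Icc {f : E → E} (hf : LocallyLipschitz f) {x₀ : E}
    (h : ∀ b, a ≤ b → ∃ γ : ℝ → E, γ a = x₀ ∧ IsIntegralCurveOn γ (fun _ ↦ f) (Icc a b)) :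
    ∃ γ : ℝ → E, γ a = x₀ ∧ IsIntegralCurveOn γ (fun _ ↦ f) (Ici a) := by
  choose! α hα₀ hα using h
  have agree {t b : ℝ} (hat : a ≤ t) (htb : t ≤ b) : α t t = α b t :=
    eqOn_Icc_of_isIntegralCurveOn (locallyLipschitzOn_univ.2 hf) (hα t hat) (mapsTo_univ _ _)
      ((hα b (hat.trans htb)).mono (Icc_subset_Icc_right htb)) (mapsTo_univ _ _)
      ((hα₀ t hat).trans (hα₀ b (hat.trans htb)).symm) (right_mem_Icc.2 hat)
  refine ⟨fun t ↦ α t t, hα₀ a le_rfl, fun t (ht : a ≤ t) ↦ ?_⟩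
  have ht' : t < t + 1 := lt_add_one t
  have deriv_Icc : HasDerivWithinAt (fun s ↦ α s s) (f (α t t)) (Icc a (t + 1)) t := by
    rw [agree ht ht'.le]
    exact (hα (t + 1) (ht.trans ht'.le) t ⟨ht, ht'.le⟩).congr (fun s hs ↦ agree hs.1 hs.2)
      (agree ht ht'.le)
  refine deriv_Icc.mono_of_mem_nhdsWithin ?_
  rw [← Ici_inter_Iic]
  exact inter_mem_nhdsWithin _ (Iic_mem_nhds ht')

theorem exists_isIntegralCurveOn_Ici_of_lipschitzWith_of_norm_le [CompleteSpace E] {f : E → E}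
    {K L : ℝ≥0} (hf : LipschitzWith K f) (hL : ∀ x, ‖f x‖ ≤ L) (a : ℝ) (x₀ : E) :
    ∃ γ : ℝ → E, γ a = x₀ ∧ IsIntegralCurveOn γ (fun _ ↦ f) (Ici a) := by
  refine exists_isIntegralCurveOn_Ici_of_forall_Icc hf.locallyLipschitz fun b hab ↦ ?_
  have picard : IsPicardLindelof (fun _ ↦ f) (⟨a, left_mem_Icc.2 hab⟩ : Icc a b) x₀
      (L * (b - a).toNNReal) 0 L K :=
    .of_time_independent (fun x _ ↦ hL x) hf.lipschitzOnWith (by simp [hab])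
  exact picard.exists_eq_forall_mem_Icc_hasDerivWithinAt₀

end IntegralCurve

section Barrier

variable {a b c : ℝ}

theorem image_le_of_deriv_right_nonpos_of_lt {u u' : ℝ → ℝ} (hu : ContinuousOn u (Icc a b))
    (hu' : ∀ t ∈ Ico a b, HasDerivWithinAt u (u' t) (Ici t) t) (ha : u a ≤ c)
    (bound : ∀ t ∈ Ico a b, c < u t → u' t ≤ 0) : ∀ t ∈ Icc a b, u t ≤ c := by
  -- The barrier is above `c` already at time `a`, so `bound` applies wherever `u` touches it.
  have fence {δ : ℝ} (hδ : 0 < δ) : ∀ t ∈ Icc a b, u t ≤ c + δ * (1 + (t - a)) := by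
    have hB (t : ℝ) : HasDerivAt (fun s ↦ c + δ * (1 + (s - a))) δ t := by
      simpa using ((((hasDerivAt_id t).sub_const a).const_add 1).const_mul δ).const_add c
    refine fun t ht ↦ image_le_of_deriv_right_lt_deriv_boundary hu hu' ?_ hB
      (fun s hs hus ↦ (bound s hs ?_).trans_lt hδ) ht
    · linarith
    · have : 0 < δ * (1 + (s - a)) := mul_pos hδ (by linarith [hs.1])
      linarith
  intro t ht
  have hta : 0 < 1 + (t - a) := by linarith [ht.1]
  refine le_of_forall_pos_le_add fun η hη ↦ ?_
  simpa only [div_mul_cancel₀ η hta.ne'] using fence (div_pos hη hta) t ht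

variable {γ f : ℝ → ℝ}

theorem le_of_isIntegralCurveOn_Ici (hγ : IsIntegralCurveOn γ (fun _ ↦ f) (Ici a)) (ha : γ a ≤ c)
    (hf : ∀ x, c < x → f x ≤ 0) {t : ℝ} (ht : a ≤ t) : γ t ≤ c :=
  have hγt := hγ.mono (Icc_subset_Ici_self : Icc a t ⊆ Ici a)
  image_le_of_deriv_right_nonpos_of_lt hγt.continuousOn
    (fun _ ↦ hasDerivWithinAt_Ici_of_isIntegralCurveOn_Icc hγt) ha (fun s _ ↦ hf (γ s)) t
    (right_mem_Icc.2 ht)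

theorem ge_of_isIntegralCurveOn_Ici (hγ : IsIntegralCurveOn γ (fun _ ↦ f) (Ici a)) (ha : c ≤ γ a)
    (hf : ∀ x, x < c → 0 ≤ f x) {t : ℝ} (ht : a ≤ t) : c ≤ γ t := by
  have hneg : IsIntegralCurveOn (-γ) (fun _ x ↦ -f (-x)) (Ici a) := fun s hs ↦ by
    simpa only [Pi.neg_apply, neg_neg] using (hγ s hs).neg
  exact neg_le_neg_iff.1 <| le_of_isIntegralCurveOn_Ici hneg (neg_le_neg ha)
    (fun x hx ↦ neg_nonpos.2 (hf (-x) (neg_lt.1 hx))) ht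

theorem exists_isIntegralCurveOn_Ici_mapsTo_Icc (hf : LocallyLipschitzOn (Icc a b) f)
    (ha : 0 ≤ f a) (hb : f b ≤ 0) (t₀ : ℝ) {x₀ : ℝ} (hx₀ : x₀ ∈ Icc a b) :
    ∃ γ : ℝ → ℝ, γ t₀ = x₀ ∧ IsIntegralCurveOn γ (fun _ ↦ f) (Ici t₀) ∧
      MapsTo γ (Ici t₀) (Icc a b) := by
  have hab : a ≤ b := hx₀.1.trans hx₀.2
  obtain ⟨K, hK⟩ := hf.exists_lipschitzOnWith_of_compact isCompact_Icc
  obtain ⟨C, hC⟩ := isCompact_Icc.exists_bound_of_continuousOn hK.continuousOn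
  let g : ℝ → ℝ := IccExtend hab ((Icc a b).domRestrict f)
  have g_left {x : ℝ} (hx : x < a) : g x = f a := IccExtend_of_le_left hab _ hx.le
  have g_right {x : ℝ} (hx : b < x) : g x = f b := IccExtend_of_right_le hab _ hx.le
  have g_mem {x : ℝ} (hx : x ∈ Icc a b) : g x = f x := IccExtend_of_mem hab _ hx
  have hg : LipschitzWith (K * 1) g := hK.to_restrict.comp (LipschitzWith.projIcc hab)
  have hgC (x : ℝ) : ‖g x‖ ≤ C.toNNReal :=
    (hC _ (projIcc a b hab x).2).trans (Real.le_coe_toNNReal C)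
  obtain ⟨γ, hγ₀, hγ⟩ := exists_isIntegralCurveOn_Ici_of_lipschitzWith_of_norm_le hg hgC t₀ x₀
  have trapped : MapsTo γ (Ici t₀) (Icc a b) := fun t ht ↦
    ⟨ge_of_isIntegralCurveOn_Ici hγ (hx₀.1.trans_eq hγ₀.symm)
        (fun _ hx ↦ ha.trans_eq (g_left hx).symm) ht,
      le_of_isIntegralCurveOn_Ici hγ (hγ₀.trans_le hx₀.2)
        (fun _ hx ↦ (g_right hx).trans_le hb) ht⟩
  exact ⟨γ, hγ₀, fun t ht ↦ (hγ t ht).congr_deriv (g_mem (trapped ht)), trapped⟩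

end Barrier

section MEMS

/-- The regularized MEMS potential `φ_ε`, whose gradient flow is `u' = -φ_ε'(u)`, with an arbitrary
real exponent `p` in place of the integer `m`. It is meaningful for `-1 < u`; elsewhere it takes the
values dictated by the conventions for division by zero and for real powers of negative numbers. -/
noncomputable def memsPotential (lam ε p u : ℝ) : ℝ :=
  -lam / (1 + u) + lam * ε ^ (p - 2) / ((p - 1) * (1 + u) ^ (p - 1))

theorem memsPotential_natCast (lam ε : ℝ) {m : ℕ} (hm : 2 ≤ m) (u : ℝ) :
    memsPotential lam ε m u =
      -lam / (1 + u) + lam * ε ^ (m - 2) / (((m : ℝ) - 1) * (1 + u) ^ (m - 1)) := by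
  have cast_sub_two : (m : ℝ) - 2 = (m - 2 : ℕ) := by push_cast [hm]; rfl
  have cast_sub_one : (m : ℝ) - 1 = (m - 1 : ℕ) := by push_cast [one_le_two.trans hm]; rfl
  simp only [memsPotential, cast_sub_two, cast_sub_one, Real.rpow_natCast]

variable {lam ε p x : ℝ}

theorem contDiffOn_memsPotential (hp : p ≠ 1) {n : WithTop ℕ∞} :
    ContDiffOn ℝ n (memsPotential lam ε p) (Ioi (-1)) := by
  have base_pos {x : ℝ} (hx : x ∈ Ioi (-1)) : 0 < 1 + x := neg_lt_iff_pos_add'.1 hx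
  have h_base : ContDiffOn ℝ n (fun x : ℝ ↦ 1 + x) (Ioi (-1)) := by fun_prop
  exact (contDiffOn_const.div h_base fun x hx ↦ (base_pos hx).ne').add <|
    contDiffOn_const.div
      (contDiffOn_const.mul (h_base.rpow_const_of_ne fun x hx ↦ (base_pos hx).ne'))
      fun x hx ↦ mul_ne_zero (sub_ne_zero.2 hp) (Real.rpow_pos_of_pos (base_pos hx) _).ne'

theorem locallyLipschitzOn_neg_deriv_memsPotential (hp : p ≠ 1) :
    LocallyLipschitzOn (Ioi (-1)) fun x ↦ -deriv (memsPotential lam ε p) x :=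
  ContDiffOn.locallyLipschitzOn (convex_Ioi _)
    (((contDiffOn_memsPotential hp).deriv_of_isOpen isOpen_Ioi le_rfl).neg)

theorem deriv_memsPotential (hp : p ≠ 1) (hx : -1 < x) :
    deriv (memsPotential lam ε p) x =
      lam * ((1 + x) ^ (p - 2) - ε ^ (p - 2)) / (1 + x) ^ p := by
  have hx' : 0 < 1 + x := neg_lt_iff_pos_add'.1 hx
  have hp' : p - 1 ≠ 0 := sub_ne_zero.2 hp
  have h_base : HasDerivAt (fun u : ℝ ↦ 1 + u) 1 x := (hasDerivAt_id x).const_add 1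
  have h_deriv := ((hasDerivAt_const x (-lam)).fun_div h_base hx'.ne').fun_add <|
    (hasDerivAt_const x (lam * ε ^ (p - 2))).fun_div
      ((h_base.rpow_const (p := p - 1) (.inl hx'.ne')).const_mul (p - 1)) (by positivity)
  refine (h_deriv.congr_deriv ?_).deriv
  have rpow_sub_one : (1 + x) ^ (p - 1) = (1 + x) ^ (p - 2) * (1 + x) := by
    rw [← Real.rpow_add_one hx'.ne']; ring_nf
  have rpow_self : (1 + x) ^ p = (1 + x) ^ (p - 2) * (1 + x) ^ 2 := by
    rw [← Real.rpow_add_natCast hx'.ne']; norm_num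
  rw [show p - 1 - 1 = p - 2 by ring, rpow_sub_one, rpow_self]
  field_simp
  ring

theorem deriv_memsPotential_nonneg (hlam : 0 ≤ lam) (hε : 0 < ε) (hp : 2 ≤ p)
    (hx : -1 + ε ≤ x) : 0 ≤ deriv (memsPotential lam ε p) x := by
  have hεx : ε ≤ 1 + x := neg_add_le_iff_le_add.1 hx
  rw [deriv_memsPotential (by linarith) (by linarith)]
  have rpow_le : ε ^ (p - 2) ≤ (1 + x) ^ (p - 2) :=
    Real.rpow_le_rpow hε.le hεx (sub_nonneg.2 hp)
  exact div_nonneg (mul_nonneg hlam (sub_nonneg.2 rpow_le))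
    (Real.rpow_nonneg (hε.le.trans hεx) _)

theorem deriv_memsPotential_nonpos (hlam : 0 ≤ lam) (hp : 2 ≤ p) (hx : -1 < x)
    (hxε : x ≤ -1 + ε) : deriv (memsPotential lam ε p) x ≤ 0 := by
  have hx' : 0 ≤ 1 + x := (neg_lt_iff_pos_add'.1 hx).le
  rw [deriv_memsPotential (by linarith) hx]
  have rpow_le : (1 + x) ^ (p - 2) ≤ ε ^ (p - 2) :=
    Real.rpow_le_rpow hx' (le_neg_add_iff_add_le.1 hxε) (sub_nonneg.2 hp)
  exact div_nonpos_of_nonpos_of_nonneg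
    (mul_nonpos_of_nonneg_of_nonpos hlam (sub_nonpos.2 rpow_le)) (Real.rpow_nonneg hx' _)

theorem stmt_3_general (hlam : 0 ≤ lam) (hε : 0 < ε) (hp : 2 ≤ p) {u₀ : ℝ} (hu₀ : -1 < u₀) :
    ∃ u : ℝ → ℝ,
      (u 0 = u₀ ∧
        MapsTo u (Ici 0) (Ioi (-1)) ∧
        IsIntegralCurveOn u (fun _ x ↦ -deriv (memsPotential lam ε p) x) (Ici 0) ∧
        MapsTo u (Ici 0) (uIcc u₀ (-1 + ε))) ∧
      ∀ v : ℝ → ℝ,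
        (v 0 = u₀ ∧
          MapsTo v (Ici 0) (Ioi (-1)) ∧
          IsIntegralCurveOn v (fun _ x ↦ -deriv (memsPotential lam ε p) x) (Ici 0)) →
        EqOn v u (Ici 0) := by
  have sub_Ioi : uIcc u₀ (-1 + ε) ⊆ Ioi (-1) :=
    ordConnected_Ioi.uIcc_subset hu₀ (lt_add_of_pos_right _ hε)
  have lipschitz : LocallyLipschitzOn (Ioi (-1)) fun x ↦ -deriv (memsPotential lam ε p) x :=
    locallyLipschitzOn_neg_deriv_memsPotential (by linarith)
  have inward_left : 0 ≤ -deriv (memsPotential lam ε p) (u₀ ⊓ (-1 + ε)) := neg_nonneg.2 <|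
    deriv_memsPotential_nonpos hlam hp (sub_Ioi ⟨le_rfl, inf_le_sup⟩) inf_le_right
  have inward_right : -deriv (memsPotential lam ε p) (u₀ ⊔ (-1 + ε)) ≤ 0 := neg_nonpos.2 <|
    deriv_memsPotential_nonneg hlam hε hp le_sup_right
  obtain ⟨u, hu_zero, hu, trapped⟩ := exists_isIntegralCurveOn_Ici_mapsTo_Icc
    (lipschitz.mono sub_Ioi) inward_left inward_right 0 left_mem_uIcc
  have hu_gt : MapsTo u (Ici 0) (Ioi (-1)) := trapped.mono_right sub_Ioi
  refine ⟨u, ⟨hu_zero, hu_gt, hu, trapped⟩, ?_⟩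
  rintro v ⟨hv_zero, hv_gt, hv⟩
  exact eqOn_Ici_of_isIntegralCurveOn lipschitz hv hv_gt hu hu_gt (hv_zero.trans hu_zero.symm)

end MEMS

/-- Global existence, uniqueness and trapping for the gradient-flow ODE
`u' = -φ_ε'(u)` of the regularized MEMS potential: for every initial value
`u₀ ∈ (-1,∞)` there is a unique solution on `[0,∞)`, which stays between
`min(u₀, -1+ε)` and `max(u₀, -1+ε)` (in particular it never reaches `-1`). -/
theorem stmt_3 (lam ε : ℝ) (m : ℕ) (hlam : 0 < lam) (hε : ε ∈ Set.Ioo (0:ℝ) 1)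
    (hm : 3 ≤ m) (φ : ℝ → ℝ)
    (hφ : ∀ u : ℝ, φ u = -lam / (1 + u)
      + lam * ε ^ (m - 2) / (((m : ℝ) - 1) * (1 + u) ^ (m - 1)))
    (u₀ : ℝ) (hu₀ : -1 < u₀) :
    ∃ u : ℝ → ℝ,
      (u 0 = u₀ ∧
        (∀ t : ℝ, 0 ≤ t → -1 < u t) ∧
        (∀ t : ℝ, 0 ≤ t →
          HasDerivWithinAt u (-(deriv φ (u t))) (Set.Ici (0 : ℝ)) t) ∧
        (∀ t : ℝ, 0 ≤ t → min u₀ (-1 + ε) ≤ u t ∧ u t ≤ max u₀ (-1 + ε))) ∧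
      (∀ v : ℝ → ℝ,
        (v 0 = u₀ ∧
          (∀ t : ℝ, 0 ≤ t → -1 < v t) ∧
          (∀ t : ℝ, 0 ≤ t →
            HasDerivWithinAt v (-(deriv φ (v t))) (Set.Ici (0 : ℝ)) t)) →
        ∀ t : ℝ, 0 ≤ t → v t = u t) := by
  obtain rfl : φ = memsPotential lam ε m := funext fun u ↦
    (hφ u).trans (memsPotential_natCast lam ε (Nat.le_of_succ_le hm) u).symm
  exact stmt_3_general hlam.le hε.1 (by exact_mod_cast Nat.le_of_succ_le hm) hu₀
end

section
/- Let m ≥ 3 be an integer and K > 0, C > 0. There exists δ > 0 (depending only on m, K, C) such that for every function u : [0,1] → ℝ satisfying u(x) > -1 for all x, |u(x) - u(y)| ≤ K|x - y| for all x, y ∈ [0,1], and ∫₀¹ (1 + u(x))^{-(m-1)} dx ≤ C, one has 1 + u(x) ≥ δ for all x ∈ [0,1]. -/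
open MeasureTheory

/-!
A positive `K`-Lipschitz function satisfies `f y ≤ f x + K |y - x|`, so integrating reciprocals
over `[a, b]` gives `log (1 + K (b - a) / f x) ≤ K ∫ f⁻¹`: the logarithmic divergence of `∫ dt / t`
at `0` bounds `f x` from below. Exponents `p ≥ 1` reduce to this case through `t⁻¹ ≤ 1 + (t ^ p)⁻¹`.
-/

section

open Set
open scoped NNReal

variable {a b c p x : ℝ} {f : ℝ → ℝ}

theorem continuousOn_inv_add_mul_abs_sub {k : ℝ} (hc : 0 < c) (hk : 0 ≤ k) (s : Set ℝ) :
    ContinuousOn (fun y ↦ (c + k * |y - x|)⁻¹) s :=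
  ContinuousOn.inv₀ (by fun_prop) fun y _ ↦ by positivity

theorem mul_integral_inv_add_mul {k l : ℝ} (hc : 0 < c) (hk : 0 ≤ k) (hl : 0 ≤ l) :
    k * ∫ s in 0..l, (c + k * s)⁻¹ = Real.log (1 + k * l / c) := by
  rw [← smul_eq_mul, intervalIntegral.smul_integral_comp_add_mul (fun t ↦ t⁻¹),
    integral_inv_of_pos (by simpa using hc) (by positivity), mul_zero, add_zero, add_div,
    div_self hc.ne']

theorem mul_integral_inv_add_mul_abs_sub {k : ℝ} (hc : 0 < c) (hk : 0 ≤ k) (hx : x ∈ Icc a b) :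
    k * ∫ y in a..b, (c + k * |y - x|)⁻¹ =
      Real.log (1 + k * (x - a) / c) + Real.log (1 + k * (b - x) / c) := by
  have hleft : ∫ y in a..x, (c + k * |y - x|)⁻¹ = ∫ s in 0..x - a, (c + k * s)⁻¹ := by
    rw [← sub_self x, ← intervalIntegral.integral_comp_sub_left (fun s ↦ (c + k * s)⁻¹) x]
    refine intervalIntegral.integral_congr fun y hy ↦ ?_
    rw [uIcc_of_le hx.1] at hy
    simp only [abs_of_nonpos (sub_nonpos.2 hy.2), neg_sub]
  have hright : ∫ y in x..b, (c + k * |y - x|)⁻¹ = ∫ s in 0..b - x, (c + k * s)⁻¹ := by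
    rw [← sub_self x, ← intervalIntegral.integral_comp_sub_right (fun s ↦ (c + k * s)⁻¹) x]
    refine intervalIntegral.integral_congr fun y hy ↦ ?_
    rw [uIcc_of_le hx.2] at hy
    simp only [abs_of_nonneg (sub_nonneg.2 hy.1)]
  have hint (s t : ℝ) : IntervalIntegrable (fun y ↦ (c + k * |y - x|)⁻¹) volume s t :=
    (continuousOn_inv_add_mul_abs_sub hc hk _).intervalIntegrable
  rw [← intervalIntegral.integral_add_adjacent_intervals (hint a x) (hint x b), hleft, hright,
    mul_add, mul_integral_inv_add_mul hc hk (sub_nonneg.2 hx.1),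
    mul_integral_inv_add_mul hc hk (sub_nonneg.2 hx.2)]

theorem log_one_add_div_le_mul_integral_inv_add_mul_abs_sub {k : ℝ} (hc : 0 < c) (hk : 0 ≤ k)
    (hx : x ∈ Icc a b) :
    Real.log (1 + k * (b - a) / c) ≤ k * ∫ y in a..b, (c + k * |y - x|)⁻¹ := by
  have hxa : 0 ≤ k * (x - a) / c := div_nonneg (mul_nonneg hk (sub_nonneg.2 hx.1)) hc.le
  have hbx : 0 ≤ k * (b - x) / c := div_nonneg (mul_nonneg hk (sub_nonneg.2 hx.2)) hc.le
  have hsum : k * (b - a) / c = k * (x - a) / c + k * (b - x) / c := by ring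
  rw [mul_integral_inv_add_mul_abs_sub hc hk hx, ← Real.log_mul (by positivity) (by positivity),
    hsum]
  refine Real.log_le_log (by positivity) ?_
  linarith [mul_nonneg hxa hbx]

theorem integral_inv_add_mul_abs_sub_le_integral_inv {K : ℝ≥0}
    (hf : LipschitzOnWith K f (Icc a b)) (hpos : ∀ y ∈ Icc a b, 0 < f y) (hx : x ∈ Icc a b) :
    ∫ y in a..b, (f x + K * |y - x|)⁻¹ ≤ ∫ y in a..b, (f y)⁻¹ := by
  have hab : a ≤ b := hx.1.trans hx.2
  have hinv : IntervalIntegrable (fun y ↦ (f y)⁻¹) volume a b :=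
    (hf.continuousOn.inv₀ fun y hy ↦ (hpos y hy).ne').intervalIntegrable_of_Icc hab
  exact intervalIntegral.integral_mono_on hab
    (continuousOn_inv_add_mul_abs_sub (hpos x hx) K.2 _).intervalIntegrable hinv
    fun y hy ↦ inv_anti₀ (hpos y hy) (hf.le_add_mul hy hx)

/-- Equality holds for `f y = c + K * (y - a)` at `x = a`. -/
theorem log_one_add_div_le_mul_integral_inv {K : ℝ≥0} (hf : LipschitzOnWith K f (Icc a b))
    (hpos : ∀ y ∈ Icc a b, 0 < f y) (hx : x ∈ Icc a b) :
    Real.log (1 + K * (b - a) / f x) ≤ K * ∫ y in a..b, (f y)⁻¹ :=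
  (log_one_add_div_le_mul_integral_inv_add_mul_abs_sub (hpos x hx) K.2 hx).trans <|
    mul_le_mul_of_nonneg_left (integral_inv_add_mul_abs_sub_le_integral_inv hf hpos hx) K.2

theorem div_exp_sub_one_le_of_log_one_add_div_le {r s : ℝ} (hc : 0 < c) (hs : 0 < s)
    (h : Real.log (1 + s / c) ≤ r) : s / (Real.exp r - 1) ≤ c := by
  have hsc : 0 < s / c := div_pos hs hc
  have hexp : 1 + s / c ≤ Real.exp r := (Real.log_le_iff_le_exp (by positivity)).1 h
  exact (div_le_comm₀ hc (by linarith)).1 (by linarith)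

theorem inv_le_one_add_inv_rpow {t : ℝ} (ht : 0 < t) (hp : 1 ≤ p) : t⁻¹ ≤ 1 + (t ^ p)⁻¹ := by
  rcases le_total t 1 with h | h
  · have hpow : t ^ p ≤ t := by simpa using Real.rpow_le_rpow_of_exponent_ge ht h hp
    linarith [inv_anti₀ (Real.rpow_pos_of_pos ht p) hpow]
  · linarith [inv_le_one_of_one_le₀ h, inv_pos.2 (Real.rpow_pos_of_pos ht p)]

theorem integral_inv_le_add_integral_inv_rpow (hab : a ≤ b) (hp : 1 ≤ p)
    (hf : ContinuousOn f (Icc a b)) (hpos : ∀ y ∈ Icc a b, 0 < f y) :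
    ∫ y in a..b, (f y)⁻¹ ≤ (b - a) + ∫ y in a..b, (f y ^ p)⁻¹ := by
  have hinv : IntervalIntegrable (fun y ↦ (f y)⁻¹) volume a b :=
    (hf.inv₀ fun y hy ↦ (hpos y hy).ne').intervalIntegrable_of_Icc hab
  have hinv_rpow : IntervalIntegrable (fun y ↦ (f y ^ p)⁻¹) volume a b :=
    ((hf.rpow_const fun y hy ↦ .inl (hpos y hy).ne').inv₀
      fun y hy ↦ (Real.rpow_pos_of_pos (hpos y hy) p).ne').intervalIntegrable_of_Icc hab
  calc ∫ y in a..b, (f y)⁻¹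
      ≤ ∫ y in a..b, (1 + (f y ^ p)⁻¹) :=
        intervalIntegral.integral_mono_on hab hinv (intervalIntegrable_const.add hinv_rpow)
          fun y hy ↦ inv_le_one_add_inv_rpow (hpos y hy) hp
    _ = (b - a) + ∫ y in a..b, (f y ^ p)⁻¹ := by
        rw [intervalIntegral.integral_add intervalIntegrable_const hinv_rpow, integral_one]

theorem div_exp_sub_one_le_of_integral_inv_rpow_le {K : ℝ≥0} {C : ℝ} (hK : 0 < K) (hab : a < b)
    (hp : 1 ≤ p) (hf : LipschitzOnWith K f (Icc a b)) (hpos : ∀ y ∈ Icc a b, 0 < f y)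
    (hC : ∫ y in a..b, (f y ^ p)⁻¹ ≤ C) (hx : x ∈ Icc a b) :
    K * (b - a) / (Real.exp (K * (b - a + C)) - 1) ≤ f x := by
  refine div_exp_sub_one_le_of_log_one_add_div_le (hpos x hx) (mul_pos hK (sub_pos.2 hab)) ?_
  calc Real.log (1 + K * (b - a) / f x)
      ≤ K * ∫ y in a..b, (f y)⁻¹ := log_one_add_div_le_mul_integral_inv hf hpos hx
    _ ≤ K * (b - a + ∫ y in a..b, (f y ^ p)⁻¹) := by
        gcongr
        exact integral_inv_le_add_integral_inv_rpow hab.le hp hf.continuousOn hpos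
    _ ≤ K * (b - a + C) := by gcongr

theorem stmt_4_general {a b : ℝ} (hab : a < b) (p : ℝ) (hp : 1 ≤ p) (K C : ℝ) (hK : 0 < K)
    (hC : 0 < C) :
    ∃ δ : ℝ, 0 < δ ∧
      ∀ u : ℝ → ℝ,
        (∀ x ∈ Icc a b, -1 < u x) →
        (∀ x ∈ Icc a b, ∀ y ∈ Icc a b, |u x - u y| ≤ K * |x - y|) →
        (∫ x in Icc a b, ((1 + u x) ^ p)⁻¹) ≤ C →
        ∀ x ∈ Icc a b, δ ≤ 1 + u x := by
  lift K to ℝ≥0 using hK.le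
  have hlen : 0 < b - a := sub_pos.2 hab
  have hexp : 0 < Real.exp (K * (b - a + C)) - 1 :=
    sub_pos.2 (Real.one_lt_exp_iff.2 (by positivity))
  refine ⟨K * (b - a) / (Real.exp (K * (b - a + C)) - 1), div_pos (mul_pos hK hlen) hexp,
    fun u hu hlip henergy x hx ↦ ?_⟩
  have hf : LipschitzOnWith K (fun y ↦ 1 + u y) (Icc a b) :=
    .of_dist_le_mul fun y hy z hz ↦ by simpa [Real.dist_eq] using hlip y hy z hz
  have hpos (y) (hy : y ∈ Icc a b) : 0 < 1 + u y := by linarith [hu y hy]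
  rw [integral_Icc_eq_integral_Ioc, ← intervalIntegral.integral_of_le hab.le] at henergy
  exact div_exp_sub_one_le_of_integral_inv_rpow_le (f := fun y ↦ 1 + u y) hK hab hp hf hpos
    henergy hx

end

/-- A priori pointwise lower bound in dimension 1: a Lipschitz function on `[0,1]`
staying above `-1` whose energy integral `∫₀¹ (1+u)^{-(m-1)}` is bounded by `C`
stays uniformly away from the obstacle value `-1`, with a gap `δ > 0` depending
only on `m`, `K`, `C`. -/
theorem stmt_4 (m : ℕ) (hm : 3 ≤ m) (K C : ℝ) (hK : 0 < K) (hC : 0 < C) :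
    ∃ δ : ℝ, 0 < δ ∧
      ∀ u : ℝ → ℝ,
        (∀ x ∈ Set.Icc (0 : ℝ) 1, -1 < u x) →
        (∀ x ∈ Set.Icc (0 : ℝ) 1, ∀ y ∈ Set.Icc (0 : ℝ) 1,
          |u x - u y| ≤ K * |x - y|) →
        (∫ x in Set.Icc (0 : ℝ) 1, ((1 + u x) ^ (m - 1))⁻¹) ≤ C →
        ∀ x ∈ Set.Icc (0 : ℝ) 1, δ ≤ 1 + u x := by
  have hp : (1 : ℝ) ≤ (m - 1 : ℕ) := by exact_mod_cast (by omega : 1 ≤ m - 1)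
  simpa only [Real.rpow_natCast] using stmt_4_general zero_lt_one (m - 1 : ℕ) hp K C hK hC
end

section
/- Let α ∈ (0,1], let m be an integer with m > 1 + 2/α, and let K > 0, C > 0. Let Ω ⊂ ℝ² be the closed unit disc. There exists δ > 0 (depending only on m, α, K, C) such that for every function u : Ω → ℝ satisfying u(x) > -1 for all x ∈ Ω, the Hölder bound |u(x) - u(y)| ≤ K|x - y|^α for all x, y ∈ Ω, and ∫_Ω (1 + u(x))^{-(m-1)} dx ≤ C, one has 1 + u(x) ≥ δ for all x ∈ Ω. -/
open MeasureTheory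

/-!
If `v` is `α`-Hölder with constant `K` and `v x < K r ^ α`, then `v ≤ 2 K r ^ α` on the part of
the domain within distance `r` of `x`. In a domain of dimension `d` this part has measure at
least `c r ^ d`, so the integral of `v ^ (-p)` is at least a constant times `r ^ (d - α p)`,
which blows up as `r → 0` when `α p > d`. Choosing `r` so small that this exceeds the prescribed
bound on the integral forces `K r ^ α ≤ v` everywhere.
-/

open Filter Metric Module Set
open scoped NNReal Topology

/-- The measure density condition with exponent `d`: small balls centred in `s` meet `s` in
measure at least a constant multiple of the `d`-th power of the radius. It replaces the
dimension and the boundary regularity of a domain. Infinite measures count as zero in `μ.real`,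
so the intersections are implicitly of finite measure. -/
def HasMeasureDensity {X : Type*} [PseudoMetricSpace X] [MeasurableSpace X] (μ : Measure X)
    (s : Set X) (d : ℝ) : Prop :=
  ∃ c > 0, ∀ᶠ r in 𝓝[>] 0, ∀ x ∈ s, c * r ^ d ≤ μ.real (s ∩ closedBall x r)

lemma image_homothety_subset_inter_closedBall {E : Type*} [SeminormedAddCommGroup E]
    [NormedSpace ℝ E] {s : Set E} {x : E} (hs : StarConvex ℝ x s) {D : ℝ}
    (hD : ∀ y ∈ s, dist x y ≤ D) {t : ℝ} (ht₀ : 0 ≤ t) (ht₁ : t ≤ 1) :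
    AffineMap.homothety x t '' s ⊆ s ∩ closedBall x (t * D) := by
  rintro _ ⟨y, hy, rfl⟩
  refine ⟨hs.segment_subset hy (lineMap_mem_segment ℝ x y ⟨ht₀, ht₁⟩), ?_⟩
  rw [mem_closedBall, dist_homothety_center, Real.norm_of_nonneg ht₀]
  exact mul_le_mul_of_nonneg_left (hD y hy) ht₀

theorem hasMeasureDensity_of_convex {E : Type*} [NormedAddCommGroup E] [NormedSpace ℝ E]
    [FiniteDimensional ℝ E] [MeasurableSpace E] [BorelSpace E] {μ : Measure E}
    [μ.IsAddHaarMeasure] {s : Set E} (hs : Convex ℝ s)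
    (hbdd : Bornology.IsBounded s) (hμs : μ s ≠ 0) :
    HasMeasureDensity μ s (finrank ℝ E) := by
  obtain ⟨D, hD, hdist⟩ : ∃ D > 0, ∀ x ∈ s, ∀ y ∈ s, dist x y ≤ D := by
    obtain ⟨D, hdist⟩ := isBounded_iff.1 hbdd
    exact ⟨max D 1, by positivity, fun x hx y hy => (hdist hx hy).trans (le_max_left _ _)⟩
  have hμs_pos : 0 < μ.real s := ENNReal.toReal_pos hμs hbdd.measure_lt_top.ne
  refine ⟨μ.real s / D ^ finrank ℝ E, by positivity, ?_⟩
  filter_upwards [Ioc_mem_nhdsGT hD] with r ⟨hr₀, hrD⟩ x hx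
  have hsub := image_homothety_subset_inter_closedBall (hs.starConvex hx) (hdist x hx)
    (by positivity : 0 ≤ r / D) ((div_le_one hD).2 hrD)
  rw [div_mul_cancel₀ r hD.ne'] at hsub
  calc μ.real s / D ^ finrank ℝ E * r ^ (finrank ℝ E : ℝ)
      = μ.real (AffineMap.homothety x (r / D) '' s) := by
        rw [measureReal_def, measureReal_def, Measure.addHaar_image_homothety, ENNReal.toReal_mul,
          ENNReal.toReal_ofReal (abs_nonneg _), abs_of_nonneg (by positivity), div_pow,
          Real.rpow_natCast]
        ring
    _ ≤ μ.real (s ∩ closedBall x r) :=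
        measureReal_mono hsub (hbdd.subset inter_subset_left).measure_lt_top.ne

lemma rpow_neg_mul_measureReal_le_setIntegral {X : Type*} [MeasurableSpace X] {μ : Measure X}
    {s t : Set X} {v : X → ℝ} {p M : ℝ} (hs : MeasurableSet s) (ht : MeasurableSet t) (hts : t ⊆ s)
    (hμt : μ t ≠ ⊤) (hp : 0 ≤ p) (hv : ∀ x ∈ s, 0 < v x) (hM : ∀ x ∈ t, v x ≤ M)
    (hint : IntegrableOn (fun x => v x ^ (-p)) s μ) :
    M ^ (-p) * μ.real t ≤ ∫ x in s, v x ^ (-p) ∂μ :=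
  calc M ^ (-p) * μ.real t ≤ ∫ x in t, v x ^ (-p) ∂μ :=
        setIntegral_ge_of_const_le_real ht hμt
          (fun x hx => Real.rpow_le_rpow_of_nonpos (hv x (hts hx)) (hM x hx) (neg_nonpos.2 hp))
          (hint.mono_set hts)
    _ ≤ ∫ x in s, v x ^ (-p) ∂μ :=
        setIntegral_mono_set hint
          (ae_restrict_of_forall_mem hs fun x hx => Real.rpow_nonneg (hv x hx).le _)
          hts.eventuallyLE

lemma tendsto_rpow_neg_mul_rpow_nhdsGT_zero {A c α p d : ℝ} (hA : 0 < A) (hc : 0 < c)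
    (hd : d < α * p) :
    Tendsto (fun r : ℝ => (A * r ^ α) ^ (-p) * (c * r ^ d)) (𝓝[>] 0) atTop := by
  have hblowup : Tendsto (fun r : ℝ => A ^ (-p) * c * r ^ (d - α * p)) (𝓝[>] 0) atTop :=
    (tendsto_rpow_neg_nhdsGT_zero (sub_neg.2 hd)).const_mul_atTop (by positivity)
  refine hblowup.congr' ?_
  filter_upwards [self_mem_nhdsWithin] with r (hr : 0 < r)
  rw [Real.mul_rpow hA.le (by positivity), ← Real.rpow_mul hr.le, sub_eq_neg_add,
    Real.rpow_add hr, mul_neg]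
  ring

lemma holderOnWith_of_dist_le {X Y : Type*} [PseudoMetricSpace X] [PseudoMetricSpace Y]
    {K α : ℝ≥0} {f : X → Y} {s : Set X}
    (h : ∀ x ∈ s, ∀ y ∈ s, dist (f x) (f y) ≤ K * dist x y ^ (α : ℝ)) : HolderOnWith K α f s := by
  intro x hx y hy
  rw [edist_nndist, edist_nndist, ← ENNReal.coe_rpow_of_nonneg _ α.coe_nonneg]
  exact_mod_cast h x hx y hy

theorem stmt_5_general {X : Type*} [MetricSpace X] [MeasurableSpace X] [OpensMeasurableSpace X]
    {μ : Measure X} [IsFiniteMeasureOnCompacts μ] {s : Set X} {d p : ℝ} {K α : ℝ≥0}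
    (hs : IsCompact s) (hdens : HasMeasureDensity μ s d) (hd : 0 ≤ d) (hα : 0 < α) (hK : 0 < K)
    (hp : d / α < p) (C : ℝ) :
    ∃ δ > 0, ∀ v : X → ℝ, (∀ x ∈ s, 0 < v x) → HolderOnWith K α v s →
      ∫ x in s, v x ^ (-p) ∂μ ≤ C → ∀ x ∈ s, δ ≤ v x := by
  have hp₀ : 0 ≤ p := (div_nonneg hd α.coe_nonneg).trans hp.le
  obtain ⟨c, hc, hdens⟩ := hdens
  have hblowup : ∀ᶠ r : ℝ in 𝓝[>] 0, C < (2 * K * r ^ (α : ℝ)) ^ (-p) * (c * r ^ d) :=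
    (tendsto_rpow_neg_mul_rpow_nhdsGT_zero (by positivity) hc
      ((div_lt_iff₀' (by positivity)).1 hp)).eventually_gt_atTop C
  obtain ⟨r, ⟨hdens_r, hCr⟩, hr : 0 < r⟩ :=
    ((hdens.and hblowup).and self_mem_nhdsWithin).exists
  refine ⟨K * r ^ (α : ℝ), by positivity, fun v hv hholder hintC x hx => ?_⟩
  by_contra! hvx
  have hv_ball : ∀ y ∈ s ∩ closedBall x r, v y ≤ 2 * K * r ^ (α : ℝ) := by
    rintro y ⟨hy, hyr⟩
    have hdiff : v y - v x ≤ K * r ^ (α : ℝ) :=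
      (le_abs_self _).trans (hholder.dist_le_of_le hy hx hyr)
    linarith
  have hint : IntegrableOn (fun y => v y ^ (-p)) s μ :=
    ((hholder.continuousOn hα).rpow_const fun y hy => .inl (hv y hy).ne').integrableOn_compact hs
  refine hCr.not_ge ?_
  calc (2 * K * r ^ (α : ℝ)) ^ (-p) * (c * r ^ d)
      ≤ (2 * K * r ^ (α : ℝ)) ^ (-p) * μ.real (s ∩ closedBall x r) := by
        gcongr
        exact hdens_r x hx
    _ ≤ ∫ y in s, v y ^ (-p) ∂μ :=
        rpow_neg_mul_measureReal_le_setIntegral hs.measurableSet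
          (hs.measurableSet.inter measurableSet_closedBall) inter_subset_left
          (measure_ne_top_of_subset inter_subset_left hs.measure_ne_top) hp₀ hv hv_ball hint
    _ ≤ C := hintC

/-- A priori pointwise lower bound in dimension 2: a `C^{0,α}` Hölder function on the
closed unit disc `Ω ⊂ ℝ²` staying above `-1` whose energy integral
`∫_Ω (1+u)^{-(m-1)}` is bounded by `C` stays uniformly away from the obstacle value
`-1`, with a gap `δ > 0` depending only on `m`, `α`, `K`, `C`, provided the
regularization exponent satisfies `m > 1 + 2/α`. -/
theorem stmt_5 (α : ℝ) (hα : α ∈ Set.Ioc (0 : ℝ) 1) (m : ℕ)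
    (hm : (1 : ℝ) + 2 / α < (m : ℝ)) (K C : ℝ) (hK : 0 < K) (hC : 0 < C) :
    ∃ δ : ℝ, 0 < δ ∧
      ∀ u : EuclideanSpace ℝ (Fin 2) → ℝ,
        (∀ x ∈ Metric.closedBall (0 : EuclideanSpace ℝ (Fin 2)) 1, -1 < u x) →
        (∀ x ∈ Metric.closedBall (0 : EuclideanSpace ℝ (Fin 2)) 1,
          ∀ y ∈ Metric.closedBall (0 : EuclideanSpace ℝ (Fin 2)) 1,
            |u x - u y| ≤ K * dist x y ^ α) →
        (∫ x in Metric.closedBall (0 : EuclideanSpace ℝ (Fin 2)) 1,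
          ((1 + u x) ^ (m - 1))⁻¹) ≤ C →
        ∀ x ∈ Metric.closedBall (0 : EuclideanSpace ℝ (Fin 2)) 1, δ ≤ 1 + u x := by
  lift α to ℝ≥0 using hα.1.le
  lift K to ℝ≥0 using hK.le
  have hdens := hasMeasureDensity_of_convex (μ := volume) (convex_closedBall 0 1)
    isBounded_closedBall (measure_closedBall_pos volume (0 : EuclideanSpace ℝ (Fin 2)) one_pos).ne'
  have hp : (finrank ℝ (EuclideanSpace ℝ (Fin 2)) : ℝ) / α < (m - 1 : ℕ) := by
    have : (m : ℝ) ≤ (m - 1 : ℕ) + 1 := mod_cast le_tsub_add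
    rw [finrank_euclideanSpace_fin, Nat.cast_ofNat]
    linarith
  obtain ⟨δ, hδ, hbound⟩ := stmt_5_general (isCompact_closedBall 0 1) hdens (Nat.cast_nonneg _)
    (mod_cast hα.1) (mod_cast hK) hp C
  refine ⟨δ, hδ, fun u hu hholder hint => hbound (1 + u ·) (fun x hx => ?_)
    (holderOnWith_of_dist_le ?_) ?_⟩
  · linarith [hu x hx]
  · simpa [Real.dist_eq] using hholder
  · simpa [Real.rpow_neg_natCast] using hint
end

section
/- For every α ∈ (0,1), the improper integral l₀(α) = ∫_{-1+α}^{0} [2(1/α - 1/(1+u))]^{-1/2} du converges and equals √(α/2) ( √(1-α) + α ln(1 + √(1-α)) - α ln(√α) ). -/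
open MeasureTheory

/-!
In the variable `v = 1 + u` the integrand is `√(α / 2) * √(v / (v - α))`. The elementary primitive
of `√(v / (v - α))` extends continuously to the singular endpoint `v = α`. As the integrand is
nonnegative, this continuity alone gives integrability, and the integral is the increment of the
primitive.
-/

section SqrtRatio

variable {a b c x : ℝ}

/-- A primitive of `x ↦ √((x - b) / (x - a))` to the right of both `a` and `b`. For `b < a` the
formula remains continuous at the endpoint `x = a`, where the integrand is singular. -/
noncomputable def sqrtRatioPrimitive (a b x : ℝ) : ℝ :=
  √(x - a) * √(x - b) + (a - b) * Real.log (√(x - a) + √(x - b))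

lemma sqrtRatioPrimitive_left (a b : ℝ) :
    sqrtRatioPrimitive a b a = (a - b) * Real.log √(a - b) := by
  simp [sqrtRatioPrimitive]

lemma continuousOn_sqrtRatioPrimitive (hba : b < a) :
    ContinuousOn (sqrtRatioPrimitive a b) (Set.Ici a) := by
  have sum_ne_zero : ∀ x ∈ Set.Ici a, √(x - a) + √(x - b) ≠ 0 := fun x hx =>
    (add_pos_of_nonneg_of_pos (Real.sqrt_nonneg _)
      (Real.sqrt_pos.2 (sub_pos.2 (hba.trans_le hx)))).ne'
  exact .add (by fun_prop) (continuousOn_const.mul (.log (by fun_prop) sum_ne_zero))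

lemma hasDerivAt_sqrt_sub (hax : a < x) :
    HasDerivAt (fun y => √(y - a)) (1 / (2 * √(x - a))) x :=
  ((hasDerivAt_id x).sub_const a).sqrt (sub_pos.2 hax).ne'

lemma hasDerivAt_sqrtRatioPrimitive (hax : a < x) (hbx : b < x) :
    HasDerivAt (sqrtRatioPrimitive a b) √((x - b) / (x - a)) x := by
  have hp : 0 < √(x - a) := Real.sqrt_pos.2 (sub_pos.2 hax)
  have hq : 0 < √(x - b) := Real.sqrt_pos.2 (sub_pos.2 hbx)
  have hpq : a - b = √(x - b) ^ 2 - √(x - a) ^ 2 := by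
    rw [Real.sq_sqrt (sub_pos.2 hax).le, Real.sq_sqrt (sub_pos.2 hbx).le]
    ring
  have dp := hasDerivAt_sqrt_sub hax
  have dq := hasDerivAt_sqrt_sub hbx
  have dlog := (dp.fun_add dq).log (add_pos hp hq).ne'
  refine ((dp.fun_mul dq).fun_add (dlog.const_mul (a - b))).congr_deriv ?_
  rw [hpq, Real.sqrt_div (sub_pos.2 hbx).le]
  field_simp
  ring

theorem intervalIntegrable_sqrt_sub_div_sub (hba : b < a) (hac : a ≤ c) :
    IntervalIntegrable (fun x => √((x - b) / (x - a))) volume a c :=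
  (intervalIntegrable_iff_integrableOn_Ioc_of_le hac).2 <|
    intervalIntegral.integrableOn_deriv_of_nonneg
      ((continuousOn_sqrtRatioPrimitive hba).mono Set.Icc_subset_Ici_self)
      (fun _ hx => hasDerivAt_sqrtRatioPrimitive hx.1 (hba.trans hx.1))
      fun _ _ => Real.sqrt_nonneg _

theorem integral_sqrt_sub_div_sub (hba : b < a) (hac : a ≤ c) :
    ∫ x in a..c, √((x - b) / (x - a)) =
      √(c - a) * √(c - b) + (a - b) * Real.log (√(c - a) + √(c - b))
        - (a - b) * Real.log √(a - b) := by
  rw [intervalIntegral.integral_eq_sub_of_hasDerivAt_of_le hac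
      ((continuousOn_sqrtRatioPrimitive hba).mono Set.Icc_subset_Ici_self)
      (fun _ hx => hasDerivAt_sqrtRatioPrimitive hx.1 (hba.trans hx.1))
      (intervalIntegrable_sqrt_sub_div_sub hba hac),
    sqrtRatioPrimitive_left, sqrtRatioPrimitive]

end SqrtRatio

lemma inv_sqrt_two_mul_one_div_sub_one_div {α v : ℝ} (hα : 0 < α) (hv : 0 < v) :
    (√(2 * (1 / α - 1 / v)))⁻¹ = √(α / 2) * √(v / (v - α)) := by
  have radicand_eq : 2 * (1 / α - 1 / v) = (α / 2 * (v / (v - α)))⁻¹ := by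
    field_simp
  rw [radicand_eq, Real.sqrt_inv, inv_inv, Real.sqrt_mul (by positivity)]

/-- The improper integral `l₀(α) = ∫_{-1+α}^0 [2(1/α - 1/(1+u))]^{-1/2} du`
converges for `α ∈ (0,1)` and equals
`√(α/2)(√(1-α) + α ln(1+√(1-α)) - α ln(√α))`. -/
theorem stmt_9 (α : ℝ) (hα : α ∈ Set.Ioo (0 : ℝ) 1) :
    IntegrableOn
      (fun u : ℝ => (Real.sqrt (2 * (1 / α - 1 / (1 + u))))⁻¹)
      (Set.Ioo (-1 + α) 0) ∧
    (∫ u in Set.Ioo (-1 + α) (0 : ℝ),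
        (Real.sqrt (2 * (1 / α - 1 / (1 + u))))⁻¹)
      = Real.sqrt (α / 2) * (Real.sqrt (1 - α)
          + α * Real.log (1 + Real.sqrt (1 - α))
          - α * Real.log (Real.sqrt α)) := by
  obtain ⟨hα_pos, hα_lt⟩ := hα
  have hba : -1 < -1 + α := by linarith
  have hac : -1 + α ≤ 0 := by linarith
  have integrand_eq : Set.EqOn (fun u : ℝ => (√(2 * (1 / α - 1 / (1 + u))))⁻¹)
      (fun u => √(α / 2) * √((u - -1) / (u - (-1 + α)))) (Set.Ioo (-1 + α) 0) := by
    intro u hu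
    have hv : 0 < 1 + u := by linarith [hu.1]
    convert inv_sqrt_two_mul_one_div_sub_one_div hα_pos hv using 4 <;> ring
  constructor
  · rw [integrableOn_congr_fun integrand_eq measurableSet_Ioo,
      ← intervalIntegrable_iff_integrableOn_Ioo_of_le hac]
    exact (intervalIntegrable_sqrt_sub_div_sub hba hac).const_mul _
  · rw [setIntegral_congr_fun measurableSet_Ioo integrand_eq, integral_const_mul,
      ← integral_Ioc_eq_integral_Ioo, ← intervalIntegral.integral_of_le hac,
      integral_sqrt_sub_div_sub hba hac]
    simp [add_comm, sub_eq_add_neg]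
end

section
/- Let m ≥ 3 be an integer and fix α ∈ (0,1). Define, for ε ∈ (0,α), l_ε(α) = ∫_{-1+α}^{0} [2( (1/α - 1/(1+u)) + (ε^{m-2}/(m-1))((1+u)^{-(m-1)} - α^{-(m-1)}) )]^{-1/2} du, and l₀(α) = ∫_{-1+α}^{0} [2(1/α - 1/(1+u))]^{-1/2} du. Then lim_{ε→0⁺} (l_ε(α) - l₀(α))/ε^{m-2} = (α^{3/2}/√2) · (1/(2(m-1)α^{m-2})) ∫_{0}^{-1+1/α} ((v+1)/v)^{1/2} · ((1+v)^{m-1} - 1)/(v (1+v)^{m-2}) dv, and this limiting integral is finite. -/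
open MeasureTheory Filter

/-!
Put `δ = ε ^ (m - 2)` and substitute `u = α (1 + v) - 1`. The squared speed along the trajectory
factors as `2 v / (α (1 + v)) * (1 - c δ ρ(v))` with `c = 1 / ((m - 1) α ^ (m - 2))` and
`ρ(v) = ((1 + v) ^ (m - 1) - 1) / (v (1 + v) ^ (m - 2))`. Since `ρ` is bounded, the integrable
endpoint singularity `v ^ (-1 / 2)` of the unregularized integrand is only multiplied by a factor
that is uniformly Lipschitz in `δ`, so the half-length is differentiable in `δ` at `0`.
-/

open scoped Topology

lemma lipschitzOnWith_comp_add_mul {R E : Type*} [SeminormedRing R] [PseudoEMetricSpace E]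
    {K : NNReal} {g : R → E} {a c : R} {s t : Set R} (hg : LipschitzOnWith K g s)
    (hts : Set.MapsTo (fun δ => a + δ * c) t s) :
    LipschitzOnWith (K * ‖c‖₊) (fun δ => g (a + δ * c)) t := by
  refine hg.comp (LipschitzOnWith.of_dist_le_mul fun x _ y _ => ?_) hts
  rw [dist_add_left, dist_eq_norm, dist_eq_norm, ← sub_mul, mul_comm, coe_nnnorm]
  exact norm_mul_le _ _

theorem hasDerivAt_integral_smul_comp_add_mul {X 𝕜 E : Type*} [MeasurableSpace X]
    {μ : Measure X} [RCLike 𝕜] [NormedAddCommGroup E] [NormedSpace ℝ E] [NormedSpace 𝕜 E]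
    {w h : X → 𝕜} {g : 𝕜 → E} {a : 𝕜} {g' : E} {M : ℝ}
    (hw : Integrable w μ) (hh : AEStronglyMeasurable h μ) (hM : ∀ᵐ x ∂μ, ‖h x‖ ≤ M)
    (hgm : StronglyMeasurable g) (hg : HasStrictDerivAt g g' a) :
    HasDerivAt (fun δ => ∫ x, w x • g (a + δ * h x) ∂μ) (∫ x, w x • h x • g' ∂μ) 0 := by
  obtain ⟨K, s, hs, hK⟩ := hg.hasStrictFDerivAt.exists_lipschitzOnWith
  obtain ⟨r, hr, hrs⟩ := Metric.mem_nhds_iff.1 hs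
  have hmaps : ∀ x, ‖h x‖ ≤ M →
      Set.MapsTo (fun δ => a + δ * h x) (Metric.ball 0 (r / (|M| + 1))) s := by
    intro x hx δ hδ
    rw [mem_ball_zero_iff, lt_div_iff₀ (by positivity)] at hδ
    apply hrs
    rw [mem_ball_iff_norm, add_sub_cancel_left, norm_mul]
    refine lt_of_le_of_lt ?_ hδ
    gcongr
    linarith [le_abs_self M]
  refine (hasDerivAt_integral_of_dominated_loc_of_lip (bound := fun x => ‖w x‖ * (K * M))
    (Metric.ball_mem_nhds 0 (by positivity : 0 < r / (|M| + 1))) (.of_forall fun δ => ?_) ?_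
    (hw.aestronglyMeasurable.smul (hh.smul_const g')) ?_ (hw.norm.mul_const _)
    (.of_forall fun x => ?_)).2
  · exact hw.aestronglyMeasurable.smul
      (hgm.aestronglyMeasurable.comp_aemeasurable ((hh.aemeasurable.const_mul δ).const_add a))
  · simpa only [zero_mul, add_zero] using hw.smul_const (g a)
  · filter_upwards [hM] with x hx
    have hlip := (lipschitzWith_smul (w x)).comp_lipschitzOnWith
      (lipschitzOnWith_comp_add_mul hK (hmaps x hx))
    refine hlip.weaken ?_
    rw [← NNReal.coe_le_coe, Real.coe_nnabs]
    refine le_trans ?_ (le_abs_self _)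
    push_cast
    gcongr
  · have hline : HasDerivAt (fun δ => a + δ * h x) (h x) 0 := by
      simpa only [id, one_mul] using ((hasDerivAt_id (0 : 𝕜)).mul_const (h x)).const_add a
    exact (HasDerivAt.scomp_of_eq 0 hg.hasDerivAt hline (by simp)).const_smul (w x)

lemma hasStrictDerivAt_inv_sqrt_one : HasStrictDerivAt (fun t : ℝ => (√t)⁻¹) (-(1 / 2)) 1 := by
  have hinv : HasStrictDerivAt Inv.inv (-(√1 ^ 2)⁻¹) √(1 : ℝ) := hasStrictDerivAt_inv (by simp)
  simpa [Function.comp_def] using hinv.comp 1 (Real.hasStrictDerivAt_sqrt one_ne_zero)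

theorem hasDerivAt_integral_mul_inv_sqrt_one_sub {X : Type*} [MeasurableSpace X] {μ : Measure X}
    {w h : X → ℝ} {M : ℝ} (hw : Integrable w μ) (hh : AEStronglyMeasurable h μ)
    (hM : ∀ᵐ x ∂μ, |h x| ≤ M) :
    HasDerivAt (fun δ => ∫ x, w x * (√(1 - δ * h x))⁻¹ ∂μ) ((∫ x, w x * h x ∂μ) / 2) 0 := by
  have hderiv := hasDerivAt_integral_smul_comp_add_mul hw hh.neg
    (by simpa only [Pi.neg_apply, norm_neg, Real.norm_eq_abs] using hM)
    (Measurable.stronglyMeasurable (by fun_prop)) hasStrictDerivAt_inv_sqrt_one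
  simpa only [Pi.neg_apply, smul_eq_mul, mul_neg, neg_mul, neg_neg, neg_div, mul_one_div,
    ← sub_eq_add_neg, ← mul_div_assoc, mul_one, integral_div] using hderiv

lemma tendsto_slope_pow_zero {𝕜 E : Type*} [NontriviallyNormedField 𝕜] [NormedAddCommGroup E]
    [NormedSpace 𝕜 E] {f : 𝕜 → E} {f' : E} (hf : HasDerivAt f f' 0) {n : ℕ} (hn : n ≠ 0) :
    Tendsto (fun ε => (ε ^ n)⁻¹ • (f (ε ^ n) - f 0)) (𝓝[≠] 0) (𝓝 f') := by
  have hpow : Tendsto (fun ε : 𝕜 => ε ^ n) (𝓝[≠] 0) (𝓝[≠] 0) := by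
    refine tendsto_nhdsWithin_iff.2 ⟨?_, ?_⟩
    · simpa [hn] using ((continuous_pow n).tendsto (0 : 𝕜)).mono_left nhdsWithin_le_nhds
    · filter_upwards [self_mem_nhdsWithin] with ε hε using pow_ne_zero n hε
  simpa only [Function.comp_def, zero_add] using hf.tendsto_slope_zero.comp hpow

lemma smul_setIntegral_Ioo_comp_mul_add {E : Type*} [NormedAddCommGroup E] [NormedSpace ℝ E]
    {c : ℝ} (hc : 0 < c) (d a b : ℝ) (f : ℝ → E) :
    c • ∫ x in Set.Ioo a b, f (c * x + d) = ∫ u in Set.Ioo (c * a + d) (c * b + d), f u := by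
  rcases le_total b a with hba | hab
  · have : c * b + d ≤ c * a + d := by gcongr
    simp [*]
  · have : c * a + d ≤ c * b + d := by gcongr
    simp only [← integral_Ioc_eq_integral_Ioo, ← intervalIntegral.integral_of_le, *,
      intervalIntegral.smul_integral_comp_mul_add]

lemma integrableOn_sqrt_add_one_div (R : ℝ) :
    IntegrableOn (fun v : ℝ => √((v + 1) / v)) (Set.Ioo 0 R) := by
  rcases le_or_gt R 0 with hR | hR
  · simp [Set.Ioo_eq_empty_of_le hR]
  have hrpow : IntegrableOn (fun v : ℝ => v ^ (-(1 / 2) : ℝ)) (Set.Ioo 0 R) :=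
    (intervalIntegral.integrableOn_Ioo_rpow_iff hR).2 (by norm_num)
  refine Integrable.mono' (hrpow.const_mul √(R + 1)) (Measurable.aestronglyMeasurable (by fun_prop))
    (ae_restrict_of_forall_mem measurableSet_Ioo fun v hv => ?_)
  rw [Real.norm_of_nonneg (Real.sqrt_nonneg _), Real.sqrt_div (by linarith [hv.1]),
    Real.rpow_neg hv.1.le, ← Real.sqrt_eq_rpow, div_eq_mul_inv]
  gcongr
  exact hv.2.le

/-- The relative size `ρ` of the regularizing potential difference along a trajectory, as a function
of `v = (1 + u) / α - 1`: it is `-δ / ((n + 1) α ^ n) * ρ v` times the leading potential difference,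
where `n = m - 2` and `δ = ε ^ n`. -/
noncomputable def regularizationRatio (n : ℕ) (v : ℝ) : ℝ :=
  ((1 + v) ^ (n + 1) - 1) / (v * (1 + v) ^ n)

lemma measurable_regularizationRatio (n : ℕ) : Measurable (regularizationRatio n) := by
  unfold regularizationRatio
  fun_prop

lemma abs_regularizationRatio_le (n : ℕ) {v : ℝ} (hv : 0 < v) :
    |regularizationRatio n v| ≤ n + 1 := by
  have hpow : |(1 + v) ^ (n + 1) - 1 ^ (n + 1)| ≤
      |1 + v - 1| * (n + 1 : ℕ) * max |1 + v| |1| ^ n := abs_pow_sub_pow_le ..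
  have hmax : max |1 + v| |1| = 1 + v := by
    rw [abs_one, abs_of_pos (by positivity), max_eq_left (by linarith)]
  rw [hmax, one_pow, add_sub_cancel_left, abs_of_pos hv, Nat.cast_succ] at hpow
  rw [regularizationRatio, abs_div, abs_of_pos (by positivity : 0 < v * (1 + v) ^ n),
    div_le_iff₀ (by positivity)]
  linarith

lemma ae_abs_regularizationRatio_le (n : ℕ) (R : ℝ) :
    ∀ᵐ v ∂volume.restrict (Set.Ioo 0 R), |regularizationRatio n v| ≤ n + 1 :=
  ae_restrict_of_forall_mem measurableSet_Ioo fun _ hv => abs_regularizationRatio_le n hv.1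

lemma integrableOn_sqrt_mul_regularizationRatio (n : ℕ) (R : ℝ) :
    IntegrableOn (fun v => √((v + 1) / v) * regularizationRatio n v) (Set.Ioo 0 R) :=
  (integrableOn_sqrt_add_one_div R).mul_bdd
    (measurable_regularizationRatio n).aestronglyMeasurable (ae_abs_regularizationRatio_le n R)

/-- The squared speed `w ^ 2` at `u` on the phase-plane trajectory crossing `w = 0` at
`u = -1 + α`, from the first integral of the system. Here `n = m - 2`, and `δ` stands for
`ε ^ (m - 2)`, so that `δ = 0` is the unregularized system. -/
noncomputable def trajectorySpeedSq (n : ℕ) (α δ u : ℝ) : ℝ :=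
  2 * ((1 / α - 1 / (1 + u)) + δ / (n + 1) * (((1 + u) ^ (n + 1))⁻¹ - (α ^ (n + 1))⁻¹))

/-- The half-length `l_ε(α)` of the trajectory crossing `w = 0` at `u = -1 + α`, as a function of
`δ = ε ^ (m - 2)`, with `n = m - 2`. It is meaningful for `δ < α ^ n`; for larger `δ` the squared
speed may become negative, where the square root is `0`. -/
noncomputable def trajectoryHalfLength (n : ℕ) (α δ : ℝ) : ℝ :=
  ∫ u in Set.Ioo (-1 + α) 0, (√(trajectorySpeedSq n α δ u))⁻¹

lemma trajectorySpeedSq_mul_add (n : ℕ) (δ : ℝ) {α v : ℝ} (hα : 0 < α) (hv : 0 < v) :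
    trajectorySpeedSq n α δ (α * v + (-1 + α)) =
      (α / 2 * ((v + 1) / v))⁻¹ * (1 - ((n + 1) * α ^ n)⁻¹ * δ * regularizationRatio n v) := by
  have hu : 1 + (α * v + (-1 + α)) = α * (1 + v) := by ring
  rw [trajectorySpeedSq, regularizationRatio, hu, mul_pow, add_comm v 1]
  field_simp
  ring

lemma inv_sqrt_trajectorySpeedSq_mul_add (n : ℕ) (δ : ℝ) {α v : ℝ} (hα : 0 < α) (hv : 0 < v) :
    (√(trajectorySpeedSq n α δ (α * v + (-1 + α))))⁻¹ =
      √α / √2 * (√((v + 1) / v) *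
        (√(1 - ((n + 1) * α ^ n)⁻¹ * δ * regularizationRatio n v))⁻¹) := by
  rw [trajectorySpeedSq_mul_add n δ hα hv, Real.sqrt_mul (by positivity), Real.sqrt_inv, mul_inv,
    inv_inv, Real.sqrt_mul (by positivity), Real.sqrt_div hα.le, mul_assoc]

lemma trajectoryHalfLength_eq_integral (n : ℕ) (δ : ℝ) {α : ℝ} (hα : 0 < α) :
    trajectoryHalfLength n α δ =
      α ^ (3 / 2 : ℝ) / √2 * ∫ v in Set.Ioo 0 (-1 + 1 / α),
        √((v + 1) / v) * (√(1 - ((n + 1) * α ^ n)⁻¹ * δ * regularizationRatio n v))⁻¹ := by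
  have hright : α * (-1 + 1 / α) + (-1 + α) = 0 := by
    field_simp
    ring
  have hα32 : α ^ (3 / 2 : ℝ) = α * √α := by
    rw [Real.sqrt_eq_rpow, ← Real.rpow_one_add' hα.le (by norm_num)]
    norm_num
  have hsubst := smul_setIntegral_Ioo_comp_mul_add hα (-1 + α) 0 (-1 + 1 / α)
    fun u => (√(trajectorySpeedSq n α δ u))⁻¹
  rw [mul_zero, zero_add, hright, smul_eq_mul] at hsubst
  rw [trajectoryHalfLength, ← hsubst, hα32, mul_div_assoc, mul_assoc,
    ← integral_const_mul (√α / √2)]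
  congr 1
  exact setIntegral_congr_fun measurableSet_Ioo fun v hv =>
    inv_sqrt_trajectorySpeedSq_mul_add n δ hα hv.1

theorem hasDerivAt_trajectoryHalfLength (n : ℕ) {α : ℝ} (hα : 0 < α) :
    HasDerivAt (trajectoryHalfLength n α)
      (α ^ (3 / 2 : ℝ) / √2 * (1 / (2 * (n + 1) * α ^ n)) *
        ∫ v in Set.Ioo 0 (-1 + 1 / α), √((v + 1) / v) * regularizationRatio n v) 0 := by
  have hderiv := hasDerivAt_integral_mul_inv_sqrt_one_sub
    (integrableOn_sqrt_add_one_div (-1 + 1 / α))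
    (measurable_regularizationRatio n).aestronglyMeasurable
    (ae_abs_regularizationRatio_le n (-1 + 1 / α))
  have hscale : HasDerivAt (fun δ : ℝ => ((n + 1) * α ^ n)⁻¹ * δ) ((n + 1) * α ^ n)⁻¹ 0 := by
    simpa only [id, mul_one] using (hasDerivAt_id (0 : ℝ)).const_mul ((n + 1) * α ^ n)⁻¹
  have hcomp := (hderiv.comp_of_eq 0 hscale (mul_zero _).symm).const_mul (α ^ (3 / 2 : ℝ) / √2)
  exact (hcomp.congr_deriv (by field_simp)).congr_of_eventuallyEq
    (.of_forall fun δ => trajectoryHalfLength_eq_integral n δ hα)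

/-- First-order regular perturbation expansion of the regularized trajectory
half-length: for fixed `α ∈ (0,1)`,
`(l_ε(α) - l₀(α))/ε^(m-2)` converges as `ε → 0⁺` to
`(α^{3/2}/√2)·(1/(2(m-1)α^(m-2))) ∫_0^{-1+1/α} ((v+1)/v)^{1/2}((1+v)^(m-1)-1)/(v(1+v)^(m-2)) dv`,
and this limiting integral is finite. -/
theorem stmt_14 (m : ℕ) (hm : 3 ≤ m) (α : ℝ) (hα : α ∈ Set.Ioo (0 : ℝ) 1) :
    IntegrableOn
      (fun v : ℝ => Real.sqrt ((v + 1) / v)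
        * (((1 + v) ^ (m - 1) - 1) / (v * (1 + v) ^ (m - 2))))
      (Set.Ioo (0 : ℝ) (-1 + 1 / α)) ∧
    Tendsto
      (fun ε : ℝ =>
        ((∫ u in Set.Ioo (-1 + α) (0 : ℝ),
            (Real.sqrt (2 * ((1 / α - 1 / (1 + u))
              + (ε ^ (m - 2) / ((m : ℝ) - 1))
                * (((1 + u) ^ (m - 1))⁻¹ - (α ^ (m - 1))⁻¹))))⁻¹)
          - ∫ u in Set.Ioo (-1 + α) (0 : ℝ),
              (Real.sqrt (2 * (1 / α - 1 / (1 + u))))⁻¹) / ε ^ (m - 2))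
      (nhdsWithin 0 (Set.Ioi (0 : ℝ)))
      (nhds ((α ^ ((3 : ℝ) / 2) / Real.sqrt 2)
        * (1 / (2 * ((m : ℝ) - 1) * α ^ (m - 2)))
        * ∫ v in Set.Ioo (0 : ℝ) (-1 + 1 / α),
            Real.sqrt ((v + 1) / v)
              * (((1 + v) ^ (m - 1) - 1) / (v * (1 + v) ^ (m - 2))))) := by
  obtain ⟨n, rfl⟩ := Nat.exists_eq_add_of_le' (Nat.le_of_succ_le hm)
  have hn : n ≠ 0 := by lia
  have hsub : n + 2 - 1 = n + 1 := rfl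
  have hcast : ((n + 2 : ℕ) : ℝ) - 1 = n + 1 := by
    push_cast
    ring
  rw [hcast, hsub, Nat.add_sub_cancel]
  refine ⟨integrableOn_sqrt_mul_regularizationRatio n (-1 + 1 / α), ?_⟩
  have hslope := (tendsto_slope_pow_zero (hasDerivAt_trajectoryHalfLength n hα.1) hn).mono_left
    (nhdsGT_le_nhdsNE 0)
  simpa only [trajectoryHalfLength, trajectorySpeedSq, regularizationRatio, smul_eq_mul,
    zero_div, zero_mul, add_zero, inv_mul_eq_div] using hslope
end

section
/- Let m ≥ 4 be an integer and η ≥ 0, and define H(v) = (1/(1+η)^{m-2}) · ( Σ_{k=1}^{m-2} C(m-2,k) (k/(k+1)) v^k ) / (1+v)^{m-2} for v ≥ 0, where C(m-2,k) denotes the binomial coefficient. Then H(0) = 0, H is differentiable on [0,∞) with H'(v) = (1/(1+η)^{m-2}) (1/(1+v)^{m-1}) [ (m-2)/2 + Σ_{k=1}^{m-3} C(m-2,k+1) v^k/(k+2) ], and in particular H'(v) > 0 for all v ≥ 0, so H is strictly increasing on [0,∞). -/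
/-!
Put `n = m - 2` and `y = 1 + v`. Since `(n + 1) C(n,k) = (k + 1) C(n+1,k+1)`, the sum
`∑ C(n,k) v ^ k / (k + 1)` is the average of `1, y, …, y ^ n`. Up to the positive factor
`1 / (1 + η) ^ n`, the function `H` is therefore `1 - (∑_{i ≤ n} y ^ (i - n)) / (n + 1)`, whose
derivative `y ^ (-n-1) (∑_{i < n} (n - i) y ^ i) / (n + 1)` is positive as soon as `y > 0`;
re-expanding the last sum in powers of `v` gives the stated formula.
-/

open Finset

section BinomialExpansions

lemma sum_choose_succ_mul_pow_eq_geom_sum {R : Type*} [CommSemiring R] (n : ℕ) (x : R) :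
    ∑ k ∈ range n, (n.choose (k + 1) : R) * x ^ k = ∑ i ∈ range n, (1 + x) ^ i := by
  have h := congrArg (Polynomial.eval x) (Polynomial.geom_sum_X_comp_X_add_one_eq_sum (R := R) n)
  simpa [Polynomial.eval_finsetSum, add_comm] using h.symm

lemma sum_choose_add_two_mul_pow_eq_sum_sub_mul_pow {R : Type*} [CommRing R] (n : ℕ) (x : R) :
    ∑ k ∈ range n, ((n + 1).choose (k + 2) : R) * x ^ k =
      ∑ i ∈ range n, ((n : R) - i) * (1 + x) ^ i := by
  induction n with
  | zero => simp
  | succ n ih =>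
    calc ∑ k ∈ range (n + 1), ((n + 2).choose (k + 2) : R) * x ^ k
        = ∑ k ∈ range (n + 1), ((n + 1).choose (k + 1) : R) * x ^ k
          + ∑ k ∈ range (n + 1), ((n + 1).choose (k + 2) : R) * x ^ k := by
          simp only [Nat.choose_succ_succ' (n + 1), Nat.cast_add, add_mul, sum_add_distrib]
      _ = ∑ i ∈ range (n + 1), (1 + x) ^ i
          + ∑ i ∈ range (n + 1), ((n : R) - i) * (1 + x) ^ i := by
          rw [sum_choose_succ_mul_pow_eq_geom_sum]
          simp [sum_range_succ _ n, ih]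
      _ = ∑ i ∈ range (n + 1), (((n + 1 : ℕ) : R) - i) * (1 + x) ^ i := by
          rw [← sum_add_distrib]
          refine sum_congr rfl fun i _ => ?_
          push_cast
          ring

lemma half_add_sum_Icc_choose_succ_mul_pow_div {K : Type*} [DivisionRing K] (n : ℕ) (x : K) :
    ((n : K) + 1) / 2 + ∑ k ∈ Icc 1 n, ((n + 1).choose (k + 1) : K) * x ^ k / (k + 2) =
      ∑ k ∈ range (n + 1), ((n + 1).choose (k + 1) : K) * x ^ k / (k + 2) := by
  rw [sum_range_eq_add_Ico _ n.succ_pos, ← Ico_add_one_right_eq_Icc]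
  simp

variable {K : Type*} [Field K] [CharZero K]

lemma choose_div_add_one (n k : ℕ) :
    (n.choose k : K) / (k + 1) = (n + 1).choose (k + 1) / (n + 1) := by
  rw [div_eq_div_iff (Nat.cast_add_one_ne_zero k) (Nat.cast_add_one_ne_zero n), mul_comm]
  exact_mod_cast Nat.add_one_mul_choose_eq n k

lemma sum_choose_mul_pow_div_add_one (n : ℕ) (x : K) :
    ∑ k ∈ range (n + 1), (n.choose k : K) * x ^ k / (k + 1) =
      (∑ i ∈ range (n + 1), (1 + x) ^ i) / (n + 1) := by
  simp only [← sum_choose_succ_mul_pow_eq_geom_sum, sum_div, mul_div_right_comm,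
    choose_div_add_one]

lemma sum_choose_succ_mul_pow_div_add_two (n : ℕ) (x : K) :
    ∑ k ∈ range n, (n.choose (k + 1) : K) * x ^ k / (k + 2) =
      (∑ i ∈ range n, ((n : K) - i) * (1 + x) ^ i) / (n + 1) := by
  rw [← sum_choose_add_two_mul_pow_eq_sum_sub_mul_pow, sum_div]
  refine sum_congr rfl fun k _ => ?_
  have habsorb := choose_div_add_one (K := K) n (k + 1)
  rw [Nat.cast_add_one, add_assoc, one_add_one_eq_two] at habsorb
  rw [mul_div_right_comm, habsorb, div_mul_eq_mul_div]

lemma sum_Icc_choose_mul_div_add_one_mul_pow (n : ℕ) (x : K) :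
    ∑ k ∈ Icc 1 n, (n.choose k : K) * ((k : K) / (k + 1)) * x ^ k =
      (1 + x) ^ n - (∑ i ∈ range (n + 1), (1 + x) ^ i) / (n + 1) := by
  have hrange : ∑ k ∈ Icc 1 n, (n.choose k : K) * ((k : K) / (k + 1)) * x ^ k =
      ∑ k ∈ range (n + 1), (n.choose k : K) * ((k : K) / (k + 1)) * x ^ k := by
    rw [sum_range_eq_add_Ico _ n.succ_pos, ← Ico_add_one_right_eq_Icc]
    simp
  rw [hrange, ← sum_choose_mul_pow_div_add_one, add_comm 1 x, add_pow, ← sum_sub_distrib]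
  refine sum_congr rfl fun k _ => ?_
  have hk : (k : K) + 1 ≠ 0 := Nat.cast_add_one_ne_zero k
  rw [one_pow]
  field_simp
  ring

end BinomialExpansions

lemma sum_choose_succ_mul_pow_div_add_two_pos {K : Type*} [Field K] [LinearOrder K]
    [IsStrictOrderedRing K] {n : ℕ} (hn : n ≠ 0) {x : K} (hx : -1 < x) :
    0 < ∑ k ∈ range n, (n.choose (k + 1) : K) * x ^ k / (k + 2) := by
  rw [sum_choose_succ_mul_pow_div_add_two]
  refine div_pos (sum_pos (fun i hi => mul_pos ?_ ?_) (nonempty_range_iff.mpr hn)) (by positivity)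
  · exact sub_pos.mpr (Nat.cast_lt.mpr (mem_range.mp hi))
  · exact pow_pos (neg_lt_iff_pos_add'.mp hx) i

section Derivatives

variable {𝕜 : Type*} [NontriviallyNormedField 𝕜]

lemma hasDerivAt_geom_sum_div_pow (n : ℕ) {y : 𝕜} (hy : y ≠ 0) :
    HasDerivAt (fun z => (∑ i ∈ range (n + 1), z ^ i) / z ^ n)
      (-((∑ i ∈ range n, ((n : 𝕜) - i) * y ^ i) / y ^ (n + 1))) y := by
  have hpow (k : ℕ) : HasDerivAt (fun z : 𝕜 => z ^ k) (k * y ^ k / y) y := by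
    refine (hasDerivAt_pow k y).congr_deriv ?_
    cases k with
    | zero => simp
    | succ k => rw [Nat.add_sub_cancel, pow_succ, ← mul_assoc, mul_div_cancel_right₀ _ hy]
  have hterm (i : ℕ) :
      HasDerivAt (fun z : 𝕜 => z ^ i / z ^ n) (-(((n : 𝕜) - i) * y ^ i / y ^ (n + 1))) y := by
    refine ((hpow i).fun_div (hpow n) (pow_ne_zero n hy)).congr_deriv ?_
    field_simp
    ring
  simp only [sum_div]
  refine (HasDerivAt.fun_sum fun i _ => hterm i).congr_deriv ?_
  simp [sum_range_succ]

lemma hasDerivAt_sum_Icc_choose_mul_pow_div_one_add_pow [CharZero 𝕜] (n : ℕ) {x : 𝕜}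
    (hx : 1 + x ≠ 0) :
    HasDerivAt
      (fun z => (∑ k ∈ Icc 1 n, (n.choose k : 𝕜) * ((k : 𝕜) / (k + 1)) * z ^ k) / (1 + z) ^ n)
      (1 / (1 + x) ^ (n + 1) * ∑ k ∈ range n, (n.choose (k + 1) : 𝕜) * x ^ k / (k + 2)) x := by
  simp only [sum_Icc_choose_mul_div_add_one_mul_pow, sum_choose_succ_mul_pow_div_add_two]
  have hgeom := ((hasDerivAt_geom_sum_div_pow n hx).comp_const_add 1 x).div_const ((n : 𝕜) + 1)
  refine ((hgeom.const_sub 1).congr_deriv (by ring)).congr_of_eventuallyEq ?_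
  filter_upwards [(continuous_const_add (1 : 𝕜)).continuousAt.eventually_ne hx] with z hz
  rw [sub_div, div_self (pow_ne_zero n hz), div_right_comm]

end Derivatives

lemma strictMonoOn_sum_Icc_choose_mul_pow_div_one_add_pow {n : ℕ} (hn : n ≠ 0) :
    StrictMonoOn
      (fun v : ℝ =>
        (∑ k ∈ Icc 1 n, (n.choose k : ℝ) * ((k : ℝ) / (k + 1)) * v ^ k) / (1 + v) ^ n)
      (Set.Ioi (-1)) := by
  have hone_add {v : ℝ} (hv : -1 < v) : 0 < 1 + v := neg_lt_iff_pos_add'.mp hv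
  have hderiv {v : ℝ} (hv : -1 < v) :=
    hasDerivAt_sum_Icc_choose_mul_pow_div_one_add_pow n (hone_add hv).ne'
  refine strictMonoOn_of_deriv_pos (convex_Ioi _)
    (fun v hv => (hderiv hv).continuousAt.continuousWithinAt) fun v hv => ?_
  rw [interior_Ioi] at hv
  rw [(hderiv hv).deriv]
  exact mul_pos (one_div_pos.mpr (pow_pos (hone_add hv) _))
    (sum_choose_succ_mul_pow_div_add_two_pos hn hv)

theorem stmt_16_general (m : ℕ) (hm : 3 ≤ m) (η : ℝ) (hη : -1 < η)
    (H : ℝ → ℝ)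
    (hH : ∀ v : ℝ, H v = (1 / (1 + η) ^ (m - 2))
      * ((∑ k ∈ Finset.Icc 1 (m - 2),
          (Nat.choose (m - 2) k : ℝ) * ((k : ℝ) / ((k : ℝ) + 1)) * v ^ k)
        / (1 + v) ^ (m - 2))) :
    H 0 = 0 ∧
    (∀ v : ℝ, -1 < v →
      HasDerivAt H
        ((1 / (1 + η) ^ (m - 2)) * (1 / (1 + v) ^ (m - 1))
          * (((m : ℝ) - 2) / 2
            + ∑ k ∈ Finset.Icc 1 (m - 3),
                (Nat.choose (m - 2) (k + 1) : ℝ) * v ^ k / ((k : ℝ) + 2))) v ∧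
      0 < (1 / (1 + η) ^ (m - 2)) * (1 / (1 + v) ^ (m - 1))
          * (((m : ℝ) - 2) / 2
            + ∑ k ∈ Finset.Icc 1 (m - 3),
                (Nat.choose (m - 2) (k + 1) : ℝ) * v ^ k / ((k : ℝ) + 2))) ∧
    StrictMonoOn H (Set.Ioi (-1 : ℝ)) := by
  obtain ⟨p, rfl⟩ := Nat.exists_eq_add_of_le' hm
  have hcast : ((p + 3 : ℕ) : ℝ) - 2 = p + 1 := by push_cast; ring
  simp only [show p + 3 - 2 = p + 1 from rfl, show p + 3 - 1 = p + 2 from rfl,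
    Nat.add_sub_cancel, hcast, half_add_sum_Icc_choose_succ_mul_pow_div] at hH ⊢
  have hη_pos : 0 < 1 / (1 + η) ^ (p + 1) :=
    one_div_pos.mpr (pow_pos (neg_lt_iff_pos_add'.mp hη) _)
  refine ⟨?_, fun v hv => ?_, ?_⟩
  · rw [hH, sum_eq_zero fun k hk => ?_, zero_div, mul_zero]
    rw [zero_pow (Nat.one_le_iff_ne_zero.mp (mem_Icc.mp hk).1), mul_zero]
  · have hv_pos : 0 < 1 + v := neg_lt_iff_pos_add'.mp hv
    rw [funext hH, mul_assoc]
    refine ⟨(hasDerivAt_sum_Icc_choose_mul_pow_div_one_add_pow (p + 1) hv_pos.ne').const_mul _, ?_⟩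
    have hsum_pos := sum_choose_succ_mul_pow_div_add_two_pos p.succ_ne_zero hv
    exact mul_pos hη_pos (mul_pos (one_div_pos.mpr (pow_pos hv_pos _)) hsum_pos)
  · rw [funext hH]
    exact (strictMono_mul_left_of_pos hη_pos).comp_strictMonoOn
      (strictMonoOn_sum_Icc_choose_mul_pow_div_one_add_pow p.succ_ne_zero)

/-- Structure of the function `H(v) = (1/(1+η)^(m-2))·(Σ_{k=1}^{m-2} C(m-2,k)(k/(k+1))v^k)/(1+v)^(m-2)`
appearing in the divergence analysis of `l_ε(α)` as `α → ε⁺`: `H(0)=0`, `H` has at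
every `v ≥ 0` the derivative
`(1/(1+η)^(m-2))(1/(1+v)^(m-1))[(m-2)/2 + Σ_{k=1}^{m-3} C(m-2,k+1) v^k/(k+2)]`,
which is positive, so `H` is strictly increasing on `[0,∞)`. -/
theorem stmt_16 (m : ℕ) (hm : 4 ≤ m) (η : ℝ) (hη : 0 ≤ η)
    (H : ℝ → ℝ)
    (hH : ∀ v : ℝ, H v = (1 / (1 + η) ^ (m - 2))
      * ((∑ k ∈ Finset.Icc 1 (m - 2),
          (Nat.choose (m - 2) k : ℝ) * ((k : ℝ) / ((k : ℝ) + 1)) * v ^ k)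
        / (1 + v) ^ (m - 2))) :
    H 0 = 0 ∧
    (∀ v : ℝ, 0 ≤ v →
      HasDerivAt H
        ((1 / (1 + η) ^ (m - 2)) * (1 / (1 + v) ^ (m - 1))
          * (((m : ℝ) - 2) / 2
            + ∑ k ∈ Finset.Icc 1 (m - 3),
                (Nat.choose (m - 2) (k + 1) : ℝ) * v ^ k / ((k : ℝ) + 2))) v ∧
      0 < (1 / (1 + η) ^ (m - 2)) * (1 / (1 + v) ^ (m - 1))
          * (((m : ℝ) - 2) / 2
            + ∑ k ∈ Finset.Icc 1 (m - 3),
                (Nat.choose (m - 2) (k + 1) : ℝ) * v ^ k / ((k : ℝ) + 2))) ∧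
    StrictMonoOn H (Set.Ici (0 : ℝ)) := by
  obtain ⟨hzero, hderiv, hmono⟩ := stmt_16_general m (by omega) η (by linarith) H hH
  exact ⟨hzero, fun v hv => hderiv v (by linarith),
    hmono.mono (Set.Ici_subset_Ioi.mpr neg_one_lt_zero)⟩
end
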